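/- Let h be a framing datum with image A = h(ℝ × [0,1]), and assume the topological frontier of A in ℂ is contained in h(ℝ × {0}) ∪ h(ℝ × {1}). Let g : A → ℂ be continuous, complex-differentiable at every point of the interior of A, and such that θ ↦ g(h(θ,0)) and θ ↦ g(h(θ,1)) are infinitely differentiable. Then ∫₀^{2π} g(h(θ,0)) · (∂h/∂θ)(θ,0) dθ = ∫₀^{2π} g(h(θ,1)) · (∂h/∂θ)(θ,1) dθ. (Cauchy's theorem for annuli with thin parts: the integral of a holomorphic 1-form over the incoming boundary equals its integral over the outgoing boundary.) -/

import Mathlib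

open Set Complex Real

/-!
The integral of `g(z) dz` over the curve `h (·, t)` is locally constant in `t`. To compare two
nearby curves, reparametrize the second one as `q` so that `q(x)` lies on the normal line of the
base curve `c` at `x`. The points of this normal segment are reached by the intermediate curves,
and where the segment does not degenerate, its relative interior lies in the interior of `A` by
the inverse function theorem. The integral of `g(z) dz` along the segment from `c(x)` to `q(x)`
then has derivative `q'(x) g(q(x)) - c'(x) g(c(x))` in `x`: by the holomorphy of `g` where
`c(x) ≠ q(x)`, and by the continuity of `g` alone where `c(x) = q(x)`, so that thin parts of the
annulus are harmless. Integrating this derivative over a period gives the equality of the two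
contour integrals.
-/

open Filter Topology AffineMap
open MeasureTheory (volume)

theorem continuousOn_intervalIntegral_of_continuousOn {X E : Type*} [TopologicalSpace X]
    [FirstCountableTopology X] [NormedAddCommGroup E] [NormedSpace ℝ E] {f : X → ℝ → E} {s : Set X}
    {a b : ℝ} (hf : ContinuousOn f.uncurry (s ×ˢ uIcc a b)) :
    ContinuousOn (fun x => ∫ t in a..b, f x t) s := by
  rw [continuousOn_iff_continuous_domRestrict]
  let clamp : ℝ → ℝ := fun t => projIcc (a ⊓ b) (a ⊔ b) inf_le_sup t
  have hclamp : Continuous (fun (x : s) t => f x (clamp t)).uncurry :=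
    hf.comp_continuous (f := fun p : s × ℝ => (p.1.1, clamp p.2)) (by fun_prop)
      fun p => ⟨p.1.2, (projIcc _ _ inf_le_sup p.2).2⟩
  refine (intervalIntegral.continuous_parametric_intervalIntegral_of_continuous' hclamp a b).congr
    fun x => intervalIntegral.integral_congr fun t ht => ?_
  simp only [clamp, projIcc_of_mem inf_le_sup ht]

theorem hasDerivAt_smul_of_eq_zero {𝕜 A E : Type*} [NontriviallyNormedField 𝕜]
    [NormedRing A] [NormedAlgebra 𝕜 A] [NormedAddCommGroup E] [NormedSpace 𝕜 E] [Module A E]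
    [IsBoundedSMul A E] [IsScalarTower 𝕜 A E] {u : 𝕜 → A} {u' : A} {f : 𝕜 → E} {x : 𝕜}
    (hu : HasDerivAt u u' x) (hux : u x = 0) (hf : ContinuousAt f x) :
    HasDerivAt (fun y => u y • f y) (u' • f x) x := by
  rw [hasDerivAt_iff_tendsto_slope] at hu ⊢
  refine (hu.smul (hf.tendsto.mono_left nhdsWithin_le_nhds)).congr fun y => ?_
  simp only [slope_def_module, hux, zero_smul, sub_zero, smul_assoc]

section Segment

variable {E : Type*} [NormedAddCommGroup E] [NormedSpace ℂ E] {g : ℂ → E} {K U : Set ℂ}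

/-- The integral of `g(ζ) dζ` along the oriented segment from `z` to `w`. -/
noncomputable def segmentIntegral (g : ℂ → E) (z w : ℂ) : E :=
  (w - z) • ∫ s in (0 : ℝ)..1, g (lineMap z w s)

theorem continuousOn_integral_lineMap (hg : ContinuousOn g K) :
    ContinuousOn (fun p : ℂ × ℂ => ∫ s in (0 : ℝ)..1, g (lineMap p.1 p.2 s))
      {p | segment ℝ p.1 p.2 ⊆ K} := by
  refine continuousOn_intervalIntegral_of_continuousOn
    (hg.comp (f := fun r : (ℂ × ℂ) × ℝ => lineMap r.1.1 r.1.2 r.2)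
      (by fun_prop) fun r hr => hr.1 (lineMap_mem_segment ℝ _ _ ?_))
  simpa only [uIcc_of_le zero_le_one] using hr.2

theorem continuousOn_segmentIntegral (hg : ContinuousOn g K) :
    ContinuousOn (fun p : ℂ × ℂ => segmentIntegral g p.1 p.2) {p | segment ℝ p.1 p.2 ⊆ K} :=
  (by fun_prop : ContinuousOn (fun p : ℂ × ℂ => p.2 - p.1) _).smul
    (continuousOn_integral_lineMap hg)

variable {c q : ℝ → ℂ} {x a b : ℝ}

theorem continuousOn_smul_comp_lineMap {c' q' : ℝ → ℂ} (hg : ContinuousOn g K)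
    (hc : Continuous c) (hq : Continuous q) (hc' : Continuous c') (hq' : Continuous q')
    (hK : ∀ y, segment ℝ (c y) (q y) ⊆ K) {σ : ℝ → ℝ} (hσ : Continuous σ) :
    ContinuousOn (fun r : ℝ × ℝ =>
      lineMap (c' r.2) (q' r.2) (σ r.1) • g (lineMap (c r.2) (q r.2) (σ r.1)))
      {r | σ r.1 ∈ Icc 0 1} :=
  ContinuousOn.smul (by fun_prop)
    (hg.comp (by fun_prop) fun r hr => hK r.2 (lineMap_mem_segment ℝ _ _ hr))

variable [CompleteSpace E]

theorem segmentIntegral_eq_sub {Q : ℂ → E} {z w : ℂ} (hg : ContinuousOn g (segment ℝ z w))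
    (hQ : ∀ ζ ∈ segment ℝ z w, HasDerivAt Q (g ζ) ζ) :
    segmentIntegral g z w = Q w - Q z := by
  have hmem : ∀ s ∈ uIcc (0 : ℝ) 1, lineMap z w s ∈ segment ℝ z w := fun s hs =>
    lineMap_mem_segment ℝ z w (by rwa [uIcc_of_le zero_le_one] at hs)
  have hderiv : ∀ s ∈ uIcc (0 : ℝ) 1,
      HasDerivAt (fun s : ℝ => Q (lineMap z w s)) ((w - z) • g (lineMap z w s)) s :=
    fun s hs => (hQ _ (hmem s hs)).scomp s hasDerivAt_lineMap
  have hint : IntervalIntegrable (fun s : ℝ => (w - z) • g (lineMap z w s)) volume 0 1 :=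
    ((hg.comp (by fun_prop) hmem).const_smul (w - z)).intervalIntegrable
  rw [segmentIntegral, ← intervalIntegral.integral_smul,
    intervalIntegral.integral_eq_sub_of_hasDerivAt hderiv hint, lineMap_apply_one,
    lineMap_apply_zero]

theorem exists_primitive_near_segment {z w : ℂ} (hU : IsOpen U) (hg : DifferentiableOn ℂ g U)
    (hzw : segment ℝ z w ⊆ U) :
    ∃ W ⊆ U, IsOpen W ∧ Convex ℝ W ∧ segment ℝ z w ⊆ W ∧
      ∃ Q : ℂ → E, ∀ ζ ∈ W, HasDerivAt Q (g ζ) ζ := by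
  have hcompact : IsCompact (segment ℝ z w) := by
    rw [segment_eq_image_lineMap]
    exact isCompact_Icc.image lineMap_continuous
  obtain ⟨δ, hδ, hsub⟩ := hcompact.exists_thickening_subset_open hU hzw
  have hconvex := (convex_segment (𝕜 := ℝ) z w).thickening δ
  obtain ⟨Q, hQ⟩ := hconvex.exists_forall_hasDerivWithinAt (𝕜 := ℂ) (hg.mono hsub)
  exact ⟨_, hsub, Metric.isOpen_thickening, hconvex, Metric.self_subset_thickening hδ _, Q,
    fun ζ hζ => (hQ ζ hζ).hasDerivAt (Metric.isOpen_thickening.mem_nhds hζ)⟩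

theorem hasDerivAt_segmentIntegral_of_segment_subset {c' q' : ℂ} (hU : IsOpen U)
    (hg : DifferentiableOn ℂ g U) (hc : HasDerivAt c c' x) (hq : HasDerivAt q q' x)
    (hseg : segment ℝ (c x) (q x) ⊆ U) :
    HasDerivAt (fun y => segmentIntegral g (c y) (q y)) (q' • g (q x) - c' • g (c x)) x := by
  obtain ⟨W, hWU, hWo, hWc, hsegW, Q, hQ⟩ := exists_primitive_near_segment hU hg hseg
  have hcW := hsegW (left_mem_segment ℝ _ _)
  have hqW := hsegW (right_mem_segment ℝ _ _)
  refine (((hQ _ hqW).scomp x hq).sub ((hQ _ hcW).scomp x hc)).congr_of_eventuallyEq ?_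
  filter_upwards [hc.continuousAt.eventually_mem (hWo.mem_nhds hcW),
    hq.continuousAt.eventually_mem (hWo.mem_nhds hqW)] with y hcy hqy
  have hsub := hWc.segment_subset hcy hqy
  exact segmentIntegral_eq_sub (hg.continuousOn.mono (hsub.trans hWU)) fun ζ hζ => hQ ζ (hsub hζ)

theorem hasDerivAt_segmentIntegral_of_eq {c' q' : ℂ} (hg : ContinuousOn g K)
    (hc : HasDerivAt c c' x) (hq : HasDerivAt q q' x) (hcq : c x = q x)
    (hK : ∀ y, segment ℝ (c y) (q y) ⊆ K) :
    HasDerivAt (fun y => segmentIntegral g (c y) (q y)) (q' • g (q x) - c' • g (c x)) x := by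
  have hmean : ContinuousAt (fun y => ∫ s in (0 : ℝ)..1, g (lineMap (c y) (q y) s)) x := by
    rw [← continuousWithinAt_univ]
    exact ((continuousOn_integral_lineMap hg) (c x, q x) (hK x)).comp
      (f := fun y => (c y, q y)) (hc.continuousAt.prodMk hq.continuousAt).continuousWithinAt
      fun y _ => hK y
  have hmean_x : ∫ s in (0 : ℝ)..1, g (lineMap (c x) (q x) s) = g (q x) := by
    simp only [hcq, lineMap_same_apply, intervalIntegral.integral_const, sub_zero, one_smul]
  rw [hcq, ← sub_smul, ← hmean_x]
  exact hasDerivAt_smul_of_eq_zero (hq.sub hc) (sub_eq_zero.2 hcq.symm) hmean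

variable {c' q' : ℝ → ℂ}

theorem segmentIntegral_sub_of_segment_subset (hU : IsOpen U) (hg : DifferentiableOn ℂ g U)
    (hc : ∀ y ∈ uIcc a b, HasDerivAt c (c' y) y) (hq : ∀ y ∈ uIcc a b, HasDerivAt q (q' y) y)
    (hc' : ContinuousOn c' (uIcc a b)) (hq' : ContinuousOn q' (uIcc a b))
    (hseg : ∀ y ∈ uIcc a b, segment ℝ (c y) (q y) ⊆ U) :
    segmentIntegral g (c b) (q b) - segmentIntegral g (c a) (q a) =
      ∫ y in a..b, (q' y • g (q y) - c' y • g (c y)) := by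
  have hgc : ContinuousOn (fun y => g (c y)) (uIcc a b) :=
    hg.continuousOn.comp (HasDerivAt.continuousOn hc)
      fun y hy => hseg y hy (left_mem_segment ℝ _ _)
  have hgq : ContinuousOn (fun y => g (q y)) (uIcc a b) :=
    hg.continuousOn.comp (HasDerivAt.continuousOn hq)
      fun y hy => hseg y hy (right_mem_segment ℝ _ _)
  exact (intervalIntegral.integral_eq_sub_of_hasDerivAt (fun y hy =>
    hasDerivAt_segmentIntegral_of_segment_subset hU hg (hc y hy) (hq y hy) (hseg y hy))
    ((hq'.smul hgq).sub (hc'.smul hgc)).intervalIntegrable).symm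

theorem segmentIntegral_sub_of_openSegment_subset (hgK : ContinuousOn g K) (hU : IsOpen U)
    (hgU : DifferentiableOn ℂ g U) (hc : ∀ y, HasDerivAt c (c' y) y)
    (hq : ∀ y, HasDerivAt q (q' y) y) (hc' : Continuous c') (hq' : Continuous q')
    (hK : ∀ y, segment ℝ (c y) (q y) ⊆ K)
    (hseg : ∀ y ∈ uIcc a b, openSegment ℝ (c y) (q y) ⊆ U) :
    segmentIntegral g (c b) (q b) - segmentIntegral g (c a) (q a) =
      ∫ y in a..b, (q' y • g (q y) - c' y • g (c y)) := by
  have hcc : Continuous c := continuous_iff_continuousAt.2 fun y => (hc y).continuousAt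
  have hqc : Continuous q := continuous_iff_continuousAt.2 fun y => (hq y).continuousAt
  -- The part of each segment between the parameters `η` and `1 - η` is a compact subset of `U`;
  -- apply the case of closed segments to it and let `η` tend to `0`.
  let p : ℝ → ℝ → ℂ := fun η y => lineMap (c y) (q y) η
  let p' : ℝ → ℝ → ℂ := fun η y => lineMap (c' y) (q' y) η
  let f : ℝ → ℝ → E := fun η y => p' (1 - η) y • g (p (1 - η) y) - p' η y • g (p η y)
  have hpd : ∀ η y, HasDerivAt (p η) (p' η y) y := fun η y => by
    simp only [p, p', lineMap_apply_module']
    exact (((hq y).sub (hc y)).const_smul η).add (hc y)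
  have hsymm : ∀ η ∈ Icc (0 : ℝ) 1, 1 - η ∈ Icc (0 : ℝ) 1 := fun η hη =>
    ⟨sub_nonneg.2 hη.2, sub_le_self 1 hη.1⟩
  have hf : ContinuousOn f.uncurry (Icc 0 1 ×ˢ uIcc a b) :=
    ((continuousOn_smul_comp_lineMap hgK hcc hqc hc' hq' hK (continuous_sub_left 1)).mono
      fun r hr => hsymm r.1 hr.1).sub
    ((continuousOn_smul_comp_lineMap hgK hcc hqc hc' hq' hK continuous_id).mono fun r hr => hr.1)
  have hV : ∀ y, ContinuousOn (fun η => segmentIntegral g (p η y) (p (1 - η) y)) (Icc 0 1) :=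
    fun y => (continuousOn_segmentIntegral hgK).comp (f := fun η => (p η y, p (1 - η) y))
      (by fun_prop) fun η hη => ((convex_segment _ _).segment_subset
        (lineMap_mem_segment ℝ _ _ hη) (lineMap_mem_segment ℝ _ _ (hsymm η hη))).trans (hK y)
  have hshrunk : EqOn (fun η => segmentIntegral g (p η b) (p (1 - η) b) -
      segmentIntegral g (p η a) (p (1 - η) a)) (fun η => ∫ y in a..b, f η y) (Ioo 0 1) := by
    refine fun η hη => segmentIntegral_sub_of_segment_subset hU hgU (fun y _ => hpd η y)
      (fun y _ => hpd (1 - η) y) (by fun_prop) (by fun_prop) fun y hy => ?_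
    exact ((convex_openSegment _ _).segment_subset (lineMap_mem_openSegment ℝ _ _ hη)
      (lineMap_mem_openSegment ℝ _ _ ⟨sub_pos.2 hη.2, sub_lt_self 1 hη.1⟩)).trans (hseg y hy)
  have hlimit := hshrunk.of_subset_closure ((hV b).sub (hV a))
    (continuousOn_intervalIntegral_of_continuousOn hf) Ioo_subset_Icc_self
    (closure_Ioo zero_ne_one).ge (left_mem_Icc.2 zero_le_one)
  simpa only [p, p', f, sub_zero, lineMap_apply_zero, lineMap_apply_one] using hlimit

theorem hasDerivAt_segmentIntegral (hgK : ContinuousOn g K) (hU : IsOpen U)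
    (hgU : DifferentiableOn ℂ g U) (hc : ∀ y, HasDerivAt c (c' y) y)
    (hq : ∀ y, HasDerivAt q (q' y) y) (hc' : Continuous c') (hq' : Continuous q')
    (hK : ∀ y, segment ℝ (c y) (q y) ⊆ K)
    (hseg : ∀ y, c y ≠ q y → openSegment ℝ (c y) (q y) ⊆ U) :
    HasDerivAt (fun y => segmentIntegral g (c y) (q y)) (q' x • g (q x) - c' x • g (c x)) x := by
  rcases eq_or_ne (c x) (q x) with hcq | hcq
  · exact hasDerivAt_segmentIntegral_of_eq hgK (hc x) (hq x) hcq hK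
  have hcc : Continuous c := continuous_iff_continuousAt.2 fun y => (hc y).continuousAt
  have hqc : Continuous q := continuous_iff_continuousAt.2 fun y => (hq y).continuousAt
  have hf : Continuous fun y => q' y • g (q y) - c' y • g (c y) :=
    (hq'.smul (hgK.comp_continuous hqc fun y => hK y (right_mem_segment ℝ _ _))).sub
      (hc'.smul (hgK.comp_continuous hcc fun y => hK y (left_mem_segment ℝ _ _)))
  obtain ⟨r, hr, hball⟩ := Metric.isOpen_iff.1 (isOpen_ne_fun hcc hqc) x hcq
  refine ((intervalIntegral.integral_hasDerivAt_right (hf.intervalIntegrable x x)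
    (hf.stronglyMeasurableAtFilter _ _) hf.continuousAt).add_const
    (segmentIntegral g (c x) (q x))).congr_of_eventuallyEq ?_
  filter_upwards [Metric.ball_mem_nhds x hr] with y hy
  have hxy : uIcc x y ⊆ Metric.ball x r := by
    rw [← segment_eq_uIcc]
    exact (convex_ball x r).segment_subset (Metric.mem_ball_self hr) hy
  exact sub_eq_iff_eq_add.1 (segmentIntegral_sub_of_openSegment_subset hgK hU hgU hc hq hc' hq' hK
    fun z hz => hseg z (hball (hxy hz)))

theorem integral_smul_comp_eq_of_openSegment_subset (hgK : ContinuousOn g K) (hU : IsOpen U)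
    (hgU : DifferentiableOn ℂ g U) (hc : ∀ y, HasDerivAt c (c' y) y)
    (hq : ∀ y, HasDerivAt q (q' y) y) (hc' : Continuous c') (hq' : Continuous q')
    (hK : ∀ y, segment ℝ (c y) (q y) ⊆ K)
    (hseg : ∀ y, c y ≠ q y → openSegment ℝ (c y) (q y) ⊆ U) (hcab : c a = c b) (hqab : q a = q b) :
    ∫ y in a..b, c' y • g (c y) = ∫ y in a..b, q' y • g (q y) := by
  have hcc : Continuous c := continuous_iff_continuousAt.2 fun y => (hc y).continuousAt
  have hqc : Continuous q := continuous_iff_continuousAt.2 fun y => (hq y).continuousAt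
  have hfc : Continuous fun y => c' y • g (c y) :=
    hc'.smul (hgK.comp_continuous hcc fun y => hK y (left_mem_segment ℝ _ _))
  have hfq : Continuous fun y => q' y • g (q y) :=
    hq'.smul (hgK.comp_continuous hqc fun y => hK y (right_mem_segment ℝ _ _))
  have hftc := intervalIntegral.integral_eq_sub_of_hasDerivAt (a := a) (b := b)
    (fun y _ => hasDerivAt_segmentIntegral (x := y) hgK hU hgU hc hq hc' hq' hK hseg)
    ((hfq.sub hfc).intervalIntegrable a b)
  rw [intervalIntegral.integral_sub (hfq.intervalIntegrable a b) (hfc.intervalIntegrable a b),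
    hcab, hqab, sub_self, sub_eq_zero] at hftc
  exact hftc.symm

end Segment

theorem eventually_forall_of_periodic {X : Type*} [TopologicalSpace X] {P : X → ℝ → Prop}
    {z₀ : X} {T : ℝ} (hT : 0 < T) (hopen : IsOpen {w : X × ℝ | P w.1 w.2})
    (hper : ∀ z, Function.Periodic (P z) T) (hz₀ : ∀ x, P z₀ x) : ∀ᶠ z in 𝓝 z₀, ∀ x, P z x := by
  have hperiod : ∀ᶠ z in 𝓝 z₀, ∀ x ∈ Icc 0 T, P z x :=
    isCompact_Icc.eventually_forall_of_forall_eventually fun x _ => hopen.mem_nhds (hz₀ x)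
  filter_upwards [hperiod] with z hz x
  obtain ⟨y, hy, hxy⟩ := (hper z).exists_mem_Ico₀ hT x
  exact hxy ▸ hz y (Ico_subset_Icc_self hy)

theorem continuous_deriv_of_contDiff_uncurry {X F : Type*} [NormedAddCommGroup X]
    [NormedSpace ℝ X] [NormedAddCommGroup F] [NormedSpace ℝ F] {f : X → ℝ → F}
    (hf : ContDiff ℝ 1 f.uncurry) : Continuous fun p : X × ℝ => deriv (f p.1) p.2 := by
  have hcomp : ContDiff ℝ 1 (Function.uncurry fun (p : X × ℝ) u => f p.1 u) :=
    hf.comp (contDiff_fst.fst.prodMk contDiff_snd)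
  exact ((hcomp.fderiv (n := 0) contDiff_snd (by norm_num)).clm_apply contDiff_const).continuous

section ImplicitFunction

variable {E : Type*} [NormedAddCommGroup E] [NormedSpace ℝ E] [CompleteSpace E] {n : WithTop ℕ∞}

theorem contDiffAt_of_locally_unique_zero {f : E × ℝ → ℝ} {υ : E → ℝ} {p : E} {f' : ℝ} {s : Set ℝ}
    (hf : ContDiffAt ℝ n f (p, υ p)) (hn : n ≠ 0)
    (hf' : HasDerivAt (fun u => f (p, u)) f' (υ p)) (hf'0 : f' ≠ 0) (hs : s ∈ 𝓝 (υ p))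
    (hzero : f (p, υ p) = 0) (huniq : ∀ᶠ z in 𝓝 p, ∀ u ∈ s, f (z, u) = 0 → u = υ z) :
    ContDiffAt ℝ n υ p := by
  have hsnd : fderiv ℝ f (p, υ p) (0, 1) = f' :=
    ((hf.differentiableAt hn).hasFDerivAt.comp_hasDerivAt (υ p)
      ((hasDerivAt_const _ p).prodMk (hasDerivAt_id _))).unique hf'
  have hinv : (fderiv ℝ f (p, υ p) ∘L .inr ℝ E ℝ).IsInvertible := by
    refine ⟨ContinuousLinearEquiv.unitsEquivAut ℝ (Units.mk0 f' hf'0), ?_⟩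
    ext
    simp [hsnd]
  have himplicit := hf.contDiffAt_implicitFunction hn hinv
  have hself := hf.implicitFunction_apply_self hn hinv
  refine himplicit.congr_of_eventuallyEq ?_
  filter_upwards [hf.eventually_apply_implicitFunction hn hinv, huniq,
    himplicit.continuousAt.eventually_mem (by rwa [hself])] with z hz huniq_z hmem
  exact (huniq_z _ hmem (hz.trans hzero)).symm

theorem exists_contDiffOn_unique_zero {f : E × ℝ → ℝ} (hf : ContDiff ℝ n f) (hn : n ≠ 0)
    {V : Set E} (hV : IsOpen V) {a b : ℝ} (hab : a ≤ b)
    (hpos : ∀ p ∈ V, ∀ u ∈ Icc a b, 0 < deriv (fun u => f (p, u)) u)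
    (ha : ∀ p ∈ V, f (p, a) < 0) (hb : ∀ p ∈ V, 0 < f (p, b)) :
    ∃ υ : E → ℝ, ContDiffOn ℝ n υ V ∧
      ∀ p ∈ V, υ p ∈ Ioo a b ∧ ∀ u ∈ Icc a b, f (p, u) = 0 ↔ u = υ p := by
  have hdiff : ∀ p, Differentiable ℝ fun u => f (p, u) := fun p =>
    (hf.differentiable hn).comp (by fun_prop)
  have hexists : ∀ p ∈ V, ∃ u ∈ Ioo a b, f (p, u) = 0 := fun p hp =>
    intermediate_value_Ioo hab (hdiff p).continuous.continuousOn ⟨ha p hp, hb p hp⟩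
  have hinj : ∀ p ∈ V, InjOn (fun u => f (p, u)) (Icc a b) := fun p hp =>
    (strictMonoOn_of_deriv_pos (convex_Icc a b) (hdiff p).continuous.continuousOn
      fun u hu => hpos p hp u (interior_subset hu)).injOn
  choose! υ hυ hυ0 using hexists
  have huniq : ∀ p ∈ V, ∀ u ∈ Icc a b, f (p, u) = 0 → u = υ p := fun p hp u hu hu0 =>
    hinj p hp hu (Ioo_subset_Icc_self (hυ p hp)) (hu0.trans (hυ0 p hp).symm)
  refine ⟨υ, fun p hp => ?_, fun p hp => ⟨hυ p hp, fun u hu => ⟨huniq p hp u hu, ?_⟩⟩⟩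
  · exact (contDiffAt_of_locally_unique_zero hf.contDiffAt hn (hdiff p _).hasDerivAt
      (hpos p hp _ (Ioo_subset_Icc_self (hυ p hp))).ne' (Icc_mem_nhds (hυ p hp).1 (hυ p hp).2)
      (hυ0 p hp) (by filter_upwards [hV.mem_nhds hp] with z hz using huniq z hz)).contDiffWithinAt
  · rintro rfl
    exact hυ0 p hp

end ImplicitFunction

section MovingFrame

variable {c : ℝ → ℂ} {x y : ℝ} {z : ℂ}

/-- The coordinate of `z` in the moving frame of the curve `c` at the parameter `x`: its real part
is the tangential component and its imaginary part the component along the normal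
`I * deriv c x`. -/
noncomputable def frameCoord (c : ℝ → ℂ) (x : ℝ) (z : ℂ) : ℂ := (z - c x) / deriv c x

/-- The chart of the plane adapted to the curve `c`, which sends `(x, y)` to the point with
coordinate `y` on the normal line of `c` at the parameter `x`. -/
noncomputable def normalChart (c : ℝ → ℂ) (p : ℝ × ℝ) : ℂ := c p.1 + p.2 * I * deriv c p.1

theorem normalChart_im_frameCoord (hx : deriv c x ≠ 0) (hz : (frameCoord c x z).re = 0) :
    normalChart c (x, (frameCoord c x z).im) = z := by
  have hcoord : ((frameCoord c x z).im : ℂ) * I = frameCoord c x z := by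
    simpa only [hz, ofReal_zero, zero_add] using re_add_im (frameCoord c x z)
  simp only [normalChart]
  rw [hcoord, frameCoord, div_mul_cancel₀ _ hx, add_sub_cancel]

theorem lineMap_normalChart (s : ℝ) :
    lineMap (c x) (normalChart c (x, y)) s = normalChart c (x, s * y) := by
  simp only [lineMap_apply_module', normalChart, real_smul, ofReal_mul]
  ring

theorem contDiff_frameCoord (hc : ContDiff ℝ 2 c) (hc' : ∀ x, deriv c x ≠ 0) :
    ContDiff ℝ 1 fun p : ℝ × ℂ => frameCoord c p.1 p.2 :=
  (contDiff_snd.sub ((hc.of_le one_le_two).comp contDiff_fst)).mul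
    (((ContDiff.deriv' (n := 1) hc).comp contDiff_fst).inv fun p => hc' p.1)

theorem eq_zero_of_frame_combination_eq_zero {a b : ℂ} {v : ℝ × ℝ} (hab : ‖b‖ * |y| < ‖a‖)
    (hv : v.1 * (a + y * I * b) + v.2 * I * a = 0) : v = 0 := by
  have hbalance : ‖(v.1 + v.2 * I : ℂ)‖ * ‖a‖ = |v.1| * (‖b‖ * |y|) := by
    have hcomb : (v.1 + v.2 * I) * a = -(v.1 * (y * I * b)) := by linear_combination hv
    have hnorm := congrArg norm hcomb
    simp only [norm_mul, norm_neg, norm_real, norm_I, mul_one, Real.norm_eq_abs] at hnorm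
    rw [hnorm, mul_comm |y|]
  have hre : |v.1| ≤ ‖(v.1 + v.2 * I : ℂ)‖ := by
    simpa using abs_re_le_norm (v.1 + v.2 * I : ℂ)
  have ha : 0 < ‖a‖ := (by positivity : 0 ≤ ‖b‖ * |y|).trans_lt hab
  have hfst : v.1 = 0 := by
    by_contra hne
    exact absurd hbalance.symm ((mul_lt_mul_of_pos_left hab (abs_pos.2 hne)).trans_le
      (mul_le_mul_of_nonneg_right hre ha.le)).ne
  have hsnd : v.2 = 0 := by
    simpa [hfst, norm_pos_iff.1 ha] using hv
  exact Prod.ext hfst hsnd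

theorem map_nhds_normalChart (hc : ContDiff ℝ 2 c)
    (hxy : ‖deriv (deriv c) x‖ * |y| < ‖deriv c x‖) :
    map (normalChart c) (𝓝 (x, y)) = 𝓝 (normalChart c (x, y)) := by
  have hstrict : HasStrictDerivAt c (deriv c x) x := hc.contDiffAt.hasStrictDerivAt (by norm_num)
  have hstrict' : HasStrictDerivAt (deriv c) (deriv (deriv c) x) x :=
    (ContDiff.deriv' (n := 1) hc).contDiffAt.hasStrictDerivAt (by norm_num)
  have hfst : HasStrictFDerivAt (Prod.fst : ℝ × ℝ → ℝ) (.fst ℝ ℝ ℝ) (x, y) :=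
    hasStrictFDerivAt_fst
  have hnormal := (ofRealCLM.comp (.snd ℝ ℝ ℝ)).hasStrictFDerivAt (x := (x, y)) |>.mul_const I
  have hchart := (hstrict.hasStrictFDerivAt.comp (x, y) hfst).add
    (hnormal.mul (hstrict'.hasStrictFDerivAt.comp (x, y) hfst))
  refine hchart.map_nhds_eq_of_surj (LinearMap.range_eq_top.2 ?_)
  refine (LinearMap.injective_iff_surjective_of_finrank_eq_finrank (by simp)).1 ?_
  refine (injective_iff_map_eq_zero _).2 fun v hv =>
    eq_zero_of_frame_combination_eq_zero hxy (.trans ?_ hv)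
  simp
  ring

theorem normalChart_mem_interior {S : Set ℂ} {Y : ℝ → ℝ} {s : ℝ} (hc : ContDiff ℝ 2 c)
    (hY : ContinuousAt Y x) (hYx : Y x ≠ 0)
    (hreach : ‖deriv (deriv c) x‖ * |Y x| < ‖deriv c x‖)
    (hS : ∀ x', ∀ y ∈ uIcc 0 (Y x'), normalChart c (x', y) ∈ S) (hs : s ∈ Ioo (0 : ℝ) 1) :
    normalChart c (x, s * Y x) ∈ interior S := by
  have hsY : |s * Y x| ≤ |Y x| := by
    rw [abs_mul, abs_of_pos hs.1]
    exact mul_le_of_le_one_left (abs_nonneg _) hs.2.le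
  rw [mem_interior_iff_mem_nhds, ← map_nhds_normalChart hc
    ((mul_le_mul_of_nonneg_left hsY (norm_nonneg _)).trans_lt hreach)]
  have hcont : ContinuousAt (fun p : ℝ × ℝ => p.2 * (Y p.1 - p.2)) (x, s * Y x) :=
    continuousAt_snd.mul ((hY.comp (f := Prod.fst) continuousAt_fst).sub continuousAt_snd)
  have hbetween : 0 < s * Y x * (Y x - s * Y x) := by
    have hprod := mul_pos (mul_pos hs.1 (sub_pos.2 hs.2)) (sq_pos_of_ne_zero hYx)
    linarith
  refine mem_map.2 ?_
  filter_upwards [hcont.eventually (lt_mem_nhds hbetween)] with p hp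
  refine hS p.1 p.2 (mem_uIcc.2 ?_)
  rcases pos_and_pos_or_neg_and_neg_of_mul_pos hp with ⟨hpos, hlt⟩ | ⟨hneg, hlt⟩
  · exact .inl ⟨hpos.le, (sub_pos.1 hlt).le⟩
  · exact .inr ⟨(sub_neg.1 hlt).le, hneg.le⟩

theorem openSegment_normalChart_subset_interior {S : Set ℂ} {Y : ℝ → ℝ} (hc : ContDiff ℝ 2 c)
    (hY : ContinuousAt Y x) (hYx : Y x ≠ 0)
    (hreach : ‖deriv (deriv c) x‖ * |Y x| < ‖deriv c x‖)
    (hS : ∀ x', ∀ y ∈ uIcc 0 (Y x'), normalChart c (x', y) ∈ S) :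
    openSegment ℝ (c x) (normalChart c (x, Y x)) ⊆ interior S := by
  rw [openSegment_eq_image_lineMap]
  rintro _ ⟨s, hs, rfl⟩
  rw [lineMap_normalChart]
  exact normalChart_mem_interior hc hY hYx hreach hS hs

theorem segment_normalChart_subset {S : Set ℂ} (hS : ∀ t ∈ uIcc 0 y, normalChart c (x, t) ∈ S) :
    segment ℝ (c x) (normalChart c (x, y)) ⊆ S := by
  rw [segment_eq_image_lineMap]
  rintro _ ⟨s, hs, rfl⟩
  rw [lineMap_normalChart]
  refine hS _ ?_
  rw [← segment_eq_uIcc, segment_eq_image_lineMap]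
  exact ⟨s, hs, by simp only [lineMap_apply_ring', sub_zero, add_zero]⟩

end MovingFrame

section NormalReparametrization

variable {h : ℝ × ℝ → ℂ} {T t₀ t δ x : ℝ} {υ : ℝ × ℝ → ℝ}

/-- The coordinate of the point `h (x + u, τ)` in the frame at `x` of the base curve `h (·, t₀)`. -/
noncomputable def frameOffset (h : ℝ × ℝ → ℂ) (t₀ : ℝ) (p : (ℝ × ℝ) × ℝ) : ℂ :=
  frameCoord (fun x => h (x, t₀)) p.1.1 (h (p.1.1 + p.2, p.1.2))

theorem frameOffset_base (x : ℝ) : frameOffset h t₀ ((x, t₀), 0) = 0 := by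
  simp only [frameOffset, frameCoord, add_zero, sub_self, zero_div]

theorem contDiff_slice {n : WithTop ℕ∞} (hh : ContDiff ℝ n h) (t : ℝ) :
    ContDiff ℝ n fun x => h (x, t) :=
  hh.comp (contDiff_id.prodMk contDiff_const)

theorem contDiff_frameOffset (hh : ContDiff ℝ 2 h) (hreg : ∀ x, deriv (fun x => h (x, t₀)) x ≠ 0) :
    ContDiff ℝ 1 (frameOffset h t₀) :=
  (contDiff_frameCoord (contDiff_slice hh t₀) hreg).comp
    (contDiff_fst.fst.prodMk ((hh.of_le one_le_two).comp (by fun_prop)))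

theorem periodic_deriv {F : Type*} [NormedAddCommGroup F] [NormedSpace ℝ F] {f : ℝ → F}
    (hf : Function.Periodic f T) : Function.Periodic (deriv f) T := fun x => by
  rw [← deriv_comp_add_const, hf.funext]

theorem frameOffset_add_period (hper : ∀ x t, h (x + T, t) = h (x, t)) (x τ u : ℝ) :
    frameOffset h t₀ ((x + T, τ), u) = frameOffset h t₀ ((x, τ), u) := by
  have hderiv : Function.Periodic (deriv fun x => h (x, t₀)) T := periodic_deriv fun x => hper x t₀
  simp only [frameOffset, frameCoord, add_right_comm x T u, hper, hderiv x]

theorem deriv_re_frameOffset_base (hreg : ∀ x, deriv (fun x => h (x, t₀)) x ≠ 0) (x : ℝ) :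
    deriv (fun u => (frameOffset h t₀ ((x, t₀), u)).re) 0 = 1 := by
  have hslice : HasDerivAt (fun u => h (x + u, t₀)) (deriv (fun x => h (x, t₀)) x) 0 := by
    have hx := (differentiableAt_of_deriv_ne_zero (hreg (x + 0))).hasDerivAt.comp_const_add x 0
    rwa [add_zero] at hx
  have hoffset := (hslice.sub_const (h (x, t₀))).div_const (deriv (fun x => h (x, t₀)) x)
  rw [div_self (hreg x)] at hoffset
  exact (reCLM.hasFDerivAt.comp_hasDerivAt 0 hoffset).deriv

/-- The estimates at `(x, τ, u)` behind the reparametrization along normals: the tangential offset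
increases in `u`, and the offset is smaller than the radius of curvature of the base curve. -/
def IsFrameAdapted (h : ℝ × ℝ → ℂ) (t₀ : ℝ) (p : (ℝ × ℝ) × ℝ) : Prop :=
  0 < deriv (fun u => (frameOffset h t₀ (p.1, u)).re) p.2 ∧
    ‖deriv (deriv fun x => h (x, t₀)) p.1.1‖ * ‖frameOffset h t₀ p‖ <
      ‖deriv (fun x => h (x, t₀)) p.1.1‖

theorem eventually_forall_isFrameAdapted (hT : 0 < T) (hh : ContDiff ℝ 2 h)
    (hper : ∀ x t, h (x + T, t) = h (x, t)) (hreg : ∀ x, deriv (fun x => h (x, t₀)) x ≠ 0) :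
    ∀ᶠ z : ℝ × ℝ in 𝓝 (t₀, 0), ∀ x, IsFrameAdapted h t₀ ((x, z.1), z.2) := by
  have hderiv : Function.Periodic (deriv fun x => h (x, t₀)) T := periodic_deriv fun x => hper x t₀
  have hoffset := contDiff_frameOffset hh hreg
  have hslope : Continuous fun p : (ℝ × ℝ) × ℝ =>
      deriv (fun u => (frameOffset h t₀ (p.1, u)).re) p.2 :=
    continuous_deriv_of_contDiff_uncurry (f := fun p u => (frameOffset h t₀ (p, u)).re)
      (reCLM.contDiff.comp hoffset)
  have hc' := ContDiff.deriv' (n := 1) (contDiff_slice hh t₀)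
  refine eventually_forall_of_periodic hT ?_ (fun z x => ?_) fun x => ⟨?_, ?_⟩
  · refine IsOpen.and (isOpen_lt continuous_const ?_) (isOpen_lt ?_ ?_)
    · exact hslope.comp (f := fun w : (ℝ × ℝ) × ℝ => ((w.2, w.1.1), w.1.2)) (by fun_prop)
    · exact ((hc'.continuous_deriv le_rfl).comp continuous_snd).norm.mul
        (hoffset.continuous.comp (by fun_prop)).norm
    · exact (hc'.continuous.comp continuous_snd).norm
  · simp only [IsFrameAdapted, frameOffset_add_period hper, hderiv x, periodic_deriv hderiv x]
  · exact zero_lt_one.trans_eq (deriv_re_frameOffset_base hreg x).symm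
  · simpa only [frameOffset_base, norm_zero, mul_zero, norm_pos_iff] using hreg x

theorem eventually_forall_frameOffset_bracket {ε : ℝ} (hT : 0 < T) (hε : 0 < ε)
    (hh : ContDiff ℝ 2 h) (hper : ∀ x t, h (x + T, t) = h (x, t))
    (hreg : ∀ x, deriv (fun x => h (x, t₀)) x ≠ 0)
    (hadapted : ∀ x, ∀ u ∈ Icc (-ε) ε, IsFrameAdapted h t₀ ((x, t₀), u)) :
    ∀ᶠ τ in 𝓝 t₀, ∀ x, (frameOffset h t₀ ((x, τ), -ε)).re < 0 ∧
      0 < (frameOffset h t₀ ((x, τ), ε)).re := by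
  have hoffset := (contDiff_frameOffset hh hreg).continuous
  refine eventually_forall_of_periodic hT (IsOpen.and ?_ ?_) (fun τ x => ?_) fun x => ?_
  · exact isOpen_lt (continuous_re.comp (hoffset.comp (by fun_prop))) continuous_const
  · exact isOpen_lt continuous_const (continuous_re.comp (hoffset.comp (by fun_prop)))
  · simp only [frameOffset_add_period hper]
  · have hmono : StrictMonoOn (fun u => (frameOffset h t₀ ((x, t₀), u)).re) (Icc (-ε) ε) :=
      strictMonoOn_of_deriv_pos (convex_Icc _ _)
        (continuous_re.comp (hoffset.comp (by fun_prop))).continuousOn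
        fun u hu => (hadapted x u (interior_subset hu)).1
    have hzero : (0 : ℝ) ∈ Icc (-ε) ε := ⟨neg_nonpos.2 hε.le, hε.le⟩
    have hleft := hmono (left_mem_Icc.2 (neg_le_self hε.le)) hzero (neg_neg_of_pos hε)
    have hright := hmono hzero (right_mem_Icc.2 (neg_le_self hε.le)) hε
    simp only [frameOffset_base, zero_re] at hleft hright
    exact ⟨hleft, hright⟩

/-- A shift `υ (x, τ)` of the parameter, defined for `τ` within `δ` of `t₀` and vanishing at
`τ = t₀`, which moves `h (x, τ)` along the curve `h (·, τ)` onto the normal line at `x` of the base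
curve `h (·, t₀)`, at a distance below the radius of curvature of the base curve. -/
structure IsNormalReparametrization (h : ℝ × ℝ → ℂ) (T t₀ δ : ℝ) (υ : ℝ × ℝ → ℝ) : Prop where
  contDiffOn : ContDiffOn ℝ 1 υ (univ ×ˢ Metric.ball t₀ δ)
  add_period : ∀ x, ∀ τ ∈ Metric.ball t₀ δ, υ (x + T, τ) = υ (x, τ)
  base : ∀ x, υ (x, t₀) = 0
  re_eq_zero : ∀ x, ∀ τ ∈ Metric.ball t₀ δ, (frameOffset h t₀ ((x, τ), υ (x, τ))).re = 0
  lt_radius : ∀ x, ∀ τ ∈ Metric.ball t₀ δ,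
    ‖deriv (deriv fun x => h (x, t₀)) x‖ * ‖frameOffset h t₀ ((x, τ), υ (x, τ))‖ <
      ‖deriv (fun x => h (x, t₀)) x‖

theorem exists_isNormalReparametrization (hT : 0 < T) (hh : ContDiff ℝ 2 h)
    (hper : ∀ x t, h (x + T, t) = h (x, t)) (hreg : ∀ x, deriv (fun x => h (x, t₀)) x ≠ 0) :
    ∃ δ > 0, ∃ υ, IsNormalReparametrization h T t₀ δ υ := by
  have hadapted := eventually_forall_isFrameAdapted hT hh hper hreg
  rw [nhds_prod_eq, (Metric.nhds_basis_ball.prod Metric.nhds_basis_closedBall).eventually_iff]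
    at hadapted
  obtain ⟨⟨δ₁, ε⟩, ⟨hδ₁, hε⟩, hadapted⟩ := hadapted
  simp only [Real.closedBall_zero_eq_Icc] at hδ₁ hε hadapted
  obtain ⟨δ₂, hδ₂, hbracket⟩ := Metric.eventually_nhds_iff_ball.1
    (eventually_forall_frameOffset_bracket hT hε hh hper hreg fun x u hu =>
      hadapted (x := (t₀, u)) ⟨Metric.mem_ball_self hδ₁, hu⟩ x)
  have hδ : 0 < min δ₁ δ₂ := lt_min hδ₁ hδ₂
  have hball₁ := Metric.ball_subset_ball (x := t₀) (min_le_left δ₁ δ₂)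
  have hball₂ := Metric.ball_subset_ball (x := t₀) (min_le_right δ₁ δ₂)
  obtain ⟨υ, hsmooth, hυ⟩ := exists_contDiffOn_unique_zero (n := 1)
    (f := fun p => (frameOffset h t₀ p).re) (V := univ ×ˢ Metric.ball t₀ (min δ₁ δ₂))
    (reCLM.contDiff.comp (contDiff_frameOffset hh hreg)) one_ne_zero
    (isOpen_univ.prod Metric.isOpen_ball) (neg_le_self hε.le)
    (fun p hp u hu => (hadapted (x := (p.2, u)) ⟨hball₁ hp.2, hu⟩ p.1).1)
    (fun p hp => (hbracket p.2 (hball₂ hp.2) p.1).1)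
    fun p hp => (hbracket p.2 (hball₂ hp.2) p.1).2
  have hIcc : ∀ x, ∀ τ ∈ Metric.ball t₀ (min δ₁ δ₂), υ (x, τ) ∈ Icc (-ε) ε := fun x τ hτ =>
    Ioo_subset_Icc_self (hυ (x, τ) ⟨mem_univ _, hτ⟩).1
  have hzero : ∀ x, ∀ τ ∈ Metric.ball t₀ (min δ₁ δ₂),
      (frameOffset h t₀ ((x, τ), υ (x, τ))).re = 0 := fun x τ hτ =>
    ((hυ (x, τ) ⟨mem_univ _, hτ⟩).2 _ (hIcc x τ hτ)).2 rfl
  refine ⟨_, hδ, υ, hsmooth, fun x τ hτ => ?_, fun x => ?_, hzero, fun x τ hτ =>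
    (hadapted (x := (τ, υ (x, τ))) ⟨hball₁ hτ, hIcc x τ hτ⟩ x).2⟩
  · refine (((hυ (x, τ) ⟨mem_univ _, hτ⟩).2 _ (hIcc (x + T) τ hτ)).1 ?_)
    rw [← frameOffset_add_period hper]
    exact hzero (x + T) τ hτ
  · refine (((hυ (x, t₀) ⟨mem_univ _, Metric.mem_ball_self hδ⟩).2 0 ?_).1 ?_).symm
    · exact ⟨neg_nonpos.2 hε.le, hε.le⟩
    · rw [frameOffset_base, zero_re]

namespace IsNormalReparametrization

theorem normalChart_im_frameOffset (hυ : IsNormalReparametrization h T t₀ δ υ)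
    (hreg : deriv (fun x => h (x, t₀)) x ≠ 0) (ht : t ∈ Metric.ball t₀ δ) :
    normalChart (fun x => h (x, t₀)) (x, (frameOffset h t₀ ((x, t), υ (x, t))).im) =
      h (x + υ (x, t), t) :=
  normalChart_im_frameCoord hreg (hυ.re_eq_zero x t ht)

theorem continuousOn_im_frameOffset (hυ : IsNormalReparametrization h T t₀ δ υ)
    (hh : ContDiff ℝ 2 h) (hreg : ∀ x, deriv (fun x => h (x, t₀)) x ≠ 0) :
    ContinuousOn (fun p => (frameOffset h t₀ (p, υ p)).im) (univ ×ˢ Metric.ball t₀ δ) :=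
  (continuous_im.comp (contDiff_frameOffset hh hreg).continuous).comp_continuousOn
    (continuousOn_id.prodMk hυ.contDiffOn.continuousOn)

theorem normalChart_mem_image (hυ : IsNormalReparametrization h T t₀ δ υ)
    (hh : ContDiff ℝ 2 h) (hreg : ∀ x, deriv (fun x => h (x, t₀)) x ≠ 0)
    (ht : t ∈ Metric.ball t₀ δ) {y : ℝ}
    (hy : y ∈ uIcc 0 (frameOffset h t₀ ((x, t), υ (x, t))).im) :
    normalChart (fun x => h (x, t₀)) (x, y) ∈ h '' (univ ×ˢ uIcc t₀ t) := by
  have hsub : uIcc t₀ t ⊆ Metric.ball t₀ δ := by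
    rw [← segment_eq_uIcc]
    exact (convex_ball t₀ δ).segment_subset (Metric.mem_ball_self (Metric.pos_of_mem_ball ht)) ht
  have hcont : ContinuousOn (fun τ => (frameOffset h t₀ ((x, τ), υ (x, τ))).im) (uIcc t₀ t) :=
    (hυ.continuousOn_im_frameOffset hh hreg).comp (f := fun τ => (x, τ)) (by fun_prop)
      fun τ hτ => ⟨mem_univ _, hsub hτ⟩
  have hivt := intermediate_value_uIcc hcont
  rw [hυ.base, frameOffset_base, zero_im] at hivt
  obtain ⟨τ, hτ, rfl⟩ := hivt hy
  exact ⟨(x + υ (x, τ), τ), ⟨mem_univ _, hτ⟩,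
    (hυ.normalChart_im_frameOffset (hreg x) (hsub hτ)).symm⟩

theorem segment_subset (hυ : IsNormalReparametrization h T t₀ δ υ)
    (hh : ContDiff ℝ 2 h) (hreg : ∀ x, deriv (fun x => h (x, t₀)) x ≠ 0)
    (ht : t ∈ Metric.ball t₀ δ) (x : ℝ) :
    segment ℝ (h (x, t₀)) (h (x + υ (x, t), t)) ⊆ h '' (univ ×ˢ uIcc t₀ t) := by
  rw [← hυ.normalChart_im_frameOffset (hreg x) ht]
  exact segment_normalChart_subset fun y hy => hυ.normalChart_mem_image hh hreg ht hy

theorem openSegment_subset_interior (hυ : IsNormalReparametrization h T t₀ δ υ)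
    (hh : ContDiff ℝ 2 h) (hreg : ∀ x, deriv (fun x => h (x, t₀)) x ≠ 0)
    (ht : t ∈ Metric.ball t₀ δ) (hne : h (x, t₀) ≠ h (x + υ (x, t), t)) :
    openSegment ℝ (h (x, t₀)) (h (x + υ (x, t), t)) ⊆
      interior (h '' (univ ×ˢ uIcc t₀ t)) := by
  let Y : ℝ → ℝ := fun x => (frameOffset h t₀ ((x, t), υ (x, t))).im
  have hY : Continuous Y := (hυ.continuousOn_im_frameOffset hh hreg).comp_continuous
    (f := fun x => (x, t)) (by fun_prop) fun x => ⟨mem_univ x, ht⟩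
  have hchart : normalChart (fun x => h (x, t₀)) (x, Y x) = h (x + υ (x, t), t) :=
    hυ.normalChart_im_frameOffset (hreg x) ht
  have hYx : Y x ≠ 0 := fun hzero => hne <| by
    simpa only [hzero, normalChart, ofReal_zero, zero_mul, add_zero] using hchart
  have hradius := (mul_le_mul_of_nonneg_left (abs_im_le_norm _) (norm_nonneg _)).trans_lt
    (hυ.lt_radius x t ht)
  rw [← hchart]
  exact openSegment_normalChart_subset_interior (contDiff_slice hh t₀) hY.continuousAt hYx hradius
    fun x' y hy => hυ.normalChart_mem_image hh hreg ht hy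

theorem contDiff_param (hυ : IsNormalReparametrization h T t₀ δ υ) (ht : t ∈ Metric.ball t₀ δ) :
    ContDiff ℝ 1 fun x => x + υ (x, t) := by
  have hshift : ContDiffOn ℝ 1 (fun x => υ (x, t)) univ :=
    hυ.contDiffOn.comp (contDiff_id.prodMk contDiff_const).contDiffOn fun x _ => ⟨mem_univ x, ht⟩
  exact contDiff_id.add (contDiffOn_univ.1 hshift)

end IsNormalReparametrization

end NormalReparametrization

section BoundaryIntegral

variable {E : Type*} [NormedAddCommGroup E]

theorem integral_deriv_smul_comp_of_periodic [NormedSpace ℝ E] {f : ℝ → E} {ϑ : ℝ → ℝ} {T : ℝ}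
    (hf : Continuous f) (hfT : Function.Periodic f T) (hϑ : ContDiff ℝ 1 ϑ)
    (hϑT : ϑ T = ϑ 0 + T) : ∫ x in 0..T, deriv ϑ x • f (ϑ x) = ∫ x in 0..T, f x := by
  have hsubst := intervalIntegral.integral_deriv_smul_comp (a := 0) (b := T)
    (fun x _ => (hϑ.differentiable one_ne_zero x).hasDerivAt)
    (hϑ.continuous_deriv le_rfl).continuousOn hf
  have hshift := hfT.intervalIntegral_add_eq (ϑ 0) 0
  rw [hϑT, hshift, zero_add] at hsubst
  exact hsubst

variable [NormedSpace ℂ E] [CompleteSpace E] {h : ℝ × ℝ → ℂ} {g : ℂ → E} {T t₀ t δ : ℝ}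
  {υ : ℝ × ℝ → ℝ}

theorem IsNormalReparametrization.integral_eq
    (hυ : IsNormalReparametrization h T t₀ δ υ) (hh : ContDiff ℝ 2 h)
    (hper : ∀ x t, h (x + T, t) = h (x, t)) (hreg : ∀ x, deriv (fun x => h (x, t₀)) x ≠ 0)
    (ht : t ∈ Metric.ball t₀ δ) (hg : ContinuousOn g (h '' (univ ×ˢ uIcc t₀ t)))
    (hg' : DifferentiableOn ℂ g (interior (h '' (univ ×ˢ uIcc t₀ t)))) :
    ∫ θ in 0..T, deriv (fun x => h (x, t)) θ • g (h (θ, t)) =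
      ∫ θ in 0..T, deriv (fun x => h (x, t₀)) θ • g (h (θ, t₀)) := by
  let ϑ : ℝ → ℝ := fun x => x + υ (x, t)
  have hϑ : ContDiff ℝ 1 ϑ := hυ.contDiff_param ht
  have hϑT : ϑ T = ϑ 0 + T := by
    have hυT := hυ.add_period 0 t ht
    rw [zero_add] at hυT
    simp only [ϑ, hυT, zero_add, add_comm]
  have hslice : ∀ τ x, HasDerivAt (fun x => h (x, τ)) (deriv (fun x => h (x, τ)) x) x :=
    fun τ x => ((contDiff_slice hh τ).differentiable two_ne_zero x).hasDerivAt
  have hslice' : ∀ τ, Continuous (deriv fun x => h (x, τ)) :=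
    fun τ => (contDiff_slice hh τ).continuous_deriv one_le_two
  have hgh : Continuous fun x => g (h (x, t)) :=
    hg.comp_continuous (contDiff_slice hh t).continuous
      fun x => mem_image_of_mem h ⟨mem_univ x, right_mem_uIcc⟩
  have hdeform := integral_smul_comp_eq_of_openSegment_subset (a := 0) (b := T)
    (q := fun x => h (ϑ x, t)) (q' := fun x => deriv ϑ x • deriv (fun x => h (x, t)) (ϑ x))
    hg isOpen_interior hg' (hslice t₀)
    (fun x => (hslice t (ϑ x)).scomp x (hϑ.differentiable one_ne_zero x).hasDerivAt)
    (hslice' t₀) ((hϑ.continuous_deriv le_rfl).smul ((hslice' t).comp hϑ.continuous))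
    (hυ.segment_subset hh hreg ht) (fun x => hυ.openSegment_subset_interior hh hreg ht)
    (by simpa using (hper 0 t₀).symm) (by simp only [hϑT, hper])
  have hslice_per : Function.Periodic (fun x => h (x, t)) T := fun x => hper x t
  have hreparam := integral_deriv_smul_comp_of_periodic
    (f := fun x => deriv (fun x => h (x, t)) x • g (h (x, t))) ((hslice' t).smul hgh)
    (fun x => by simp only [hper, periodic_deriv hslice_per x]) hϑ hϑT
  rw [hdeform, ← hreparam]
  simp only [smul_assoc]

theorem cauchy_theorem_for_annuli_with_thin_parts_general {J : Set ℝ} (hT : 0 < T)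
    (hJ : J.OrdConnected) (hh : ContDiff ℝ 2 h) (hper : ∀ θ t, h (θ + T, t) = h (θ, t))
    (hreg : ∀ θ, ∀ t ∈ J, deriv (fun x => h (x, t)) θ ≠ 0)
    (hg : ContinuousOn g (h '' (univ ×ˢ J)))
    (hg' : DifferentiableOn ℂ g (interior (h '' (univ ×ˢ J)))) {s t : ℝ} (hs : s ∈ J)
    (ht : t ∈ J) :
    ∫ θ in 0..T, deriv (fun x => h (x, s)) θ • g (h (θ, s)) =
      ∫ θ in 0..T, deriv (fun x => h (x, t)) θ • g (h (θ, t)) := by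
  have hlocal : IsLocallyConstant fun τ : J =>
      ∫ θ in 0..T, deriv (fun x => h (x, τ)) θ • g (h (θ, τ)) := by
    refine (IsLocallyConstant.iff_eventually_eq _).2 fun t₀ => ?_
    have hreg₀ : ∀ θ, deriv (fun x => h (x, t₀)) θ ≠ 0 := fun θ => hreg θ t₀ t₀.2
    obtain ⟨δ, hδ, υ, hυ⟩ := exists_isNormalReparametrization hT hh hper hreg₀
    filter_upwards [Metric.ball_mem_nhds t₀ hδ] with τ hτ
    have himage : h '' (univ ×ˢ uIcc (t₀ : ℝ) τ) ⊆ h '' (univ ×ˢ J) :=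
      image_mono (prod_mono_right (hJ.uIcc_subset t₀.2 τ.2))
    exact hυ.integral_eq hh hper hreg₀ hτ (hg.mono himage) (hg'.mono (interior_mono himage))
  have : PreconnectedSpace J := Subtype.preconnectedSpace hJ.isPreconnected
  exact hlocal.apply_eq_of_preconnectedSpace ⟨s, hs⟩ ⟨t, ht⟩

end BoundaryIntegral

theorem cauchy_theorem_for_annuli_with_thin_parts
    (h : ℝ × ℝ → ℂ)
    (hsm : ContDiff ℝ (⊤ : ℕ∞) h)
    (hper : ∀ θ t, h (θ + 2 * π, t) = h (θ, t))
    (hinj : ∀ t ∈ Icc (0:ℝ) 1, InjOn (fun θ => h (θ, t)) (Ico 0 (2 * π)))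
    (hderiv : ∀ θ : ℝ, ∀ t ∈ Icc (0:ℝ) 1, deriv (fun x => h (x, t)) θ ≠ 0)
    (hinward : ∀ θ : ℝ, ∀ t ∈ Icc (0:ℝ) 1,
      (deriv (fun s => h (θ, s)) t / deriv (fun x => h (x, t)) θ).im ≤ 0)
    (A : Set ℂ) (hA : A = h '' (univ ×ˢ Icc (0:ℝ) 1))
    (hfront : frontier A ⊆ (range fun θ => h (θ, 0)) ∪ (range fun θ => h (θ, 1)))
    (g : ℂ → ℂ)
    (hg_cont : ContinuousOn g A)
    (hg_holo : DifferentiableOn ℂ g (interior A))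
    (hg_in : ContDiff ℝ (⊤ : ℕ∞) (fun θ : ℝ => g (h (θ, 0))))
    (hg_out : ContDiff ℝ (⊤ : ℕ∞) (fun θ : ℝ => g (h (θ, 1)))) :
    ∫ θ in (0:ℝ)..(2 * π), g (h (θ, 0)) * deriv (fun x => h (x, 0)) θ =
      ∫ θ in (0:ℝ)..(2 * π), g (h (θ, 1)) * deriv (fun x => h (x, 1)) θ := by
  subst hA
  simpa only [smul_eq_mul, mul_comm] using
    cauchy_theorem_for_annuli_with_thin_parts_general two_pi_pos ordConnected_Icc
      (contDiff_infty.1 hsm 2) hper hderiv hg_cont hg_holo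
      (left_mem_Icc.2 zero_le_one) (right_mem_Icc.2 zero_le_one)
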